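/- For every γ ≥ 1, the Huber function H_γ : ℝ → ℝ satisfies 0 ≤ H_γ(t) ≤ |t| for all t ∈ ℝ, and for every fixed t ∈ ℝ, lim_{γ→∞} H_γ(t) = |t|. -/

import Mathlib

/-- The C² Huber regularization `H_γ` of the absolute value function. -/
noncomputable def huber (γ t : ℝ) : ℝ :=
  let l₁ := (1 / γ) * (1 - 1 / (2 * γ))
  let l₂ := (1 / γ) * (1 + 1 / (2 * γ))
  let F := 1 - (2 * γ + 1) ^ 2 / (8 * γ)
  let G := γ * (2 * γ + 1) / 2
  let C := -γ ^ 3 / 2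
  let D := (γ / 2 - G / 2) * l₁ ^ 2 - F * l₁ - (C / 3) * l₁ ^ 3
  let C₁ := (γ / 2) * l₁ ^ 2 - l₂
  let K := F * (l₂ - l₁) + (G / 2) * (l₂ ^ 2 - l₁ ^ 2) + (C / 3) * (l₂ ^ 3 - l₁ ^ 3)
  if |t| ≤ l₁ then (γ / 2) * t ^ 2
  else if |t| ≤ l₂ then F * |t| + (G / 2) * t ^ 2 + (C / 3) * |t| ^ 3 + D
  else |t| + C₁ + K

/-!
Put `δ = 1/(2γ) + 1/(24γ³)`. The constants of `H_γ` are such that `H_γ(t) = |t| - δ` for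
`|t| ≥ l₂`, while on the transition zone `H_γ(t) = |t| - δ + (γ³/6)(l₂ - |t|)³`. Since
`0 ≤ l₂ - |t| ≤ l₂ - l₁ = 1/γ²` there, elementary estimates on each of the three pieces give
`max 0 (|t| - δ) ≤ H_γ(t) ≤ |t|` as soon as `γ ≥ 1/2`, that is, as soon as `l₁ ≥ 0`. As `δ → 0`
does not depend on `t`, the convergence is even uniform.
-/

open Filter Topology

/-- The threshold `l₁` below which `huber γ` is quadratic. -/
noncomputable def huberInner (γ : ℝ) : ℝ := γ⁻¹ - γ⁻¹ ^ 2 / 2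

/-- The threshold `l₂` above which `huber γ` is a translate of the absolute value. -/
noncomputable def huberOuter (γ : ℝ) : ℝ := γ⁻¹ + γ⁻¹ ^ 2 / 2

/-- The limit `δ` of `|t| - huber γ t` as `|t| → ∞`, which is the uniform distance between
`huber γ` and the absolute value when `1 / 2 ≤ γ`. In the paper's notation it is `-(C₁ + K)`. -/
noncomputable def huberDefect (γ : ℝ) : ℝ := γ⁻¹ / 2 + γ⁻¹ ^ 3 / 24

section

variable {γ t : ℝ}

theorem one_div_mul_one_sub_eq_huberInner (γ : ℝ) :
    1 / γ * (1 - 1 / (2 * γ)) = huberInner γ := by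
  unfold huberInner
  ring

theorem one_div_mul_one_add_eq_huberOuter (γ : ℝ) :
    1 / γ * (1 + 1 / (2 * γ)) = huberOuter γ := by
  unfold huberOuter
  ring

theorem huberOuter_sub_huberInner (γ : ℝ) : huberOuter γ - huberInner γ = γ⁻¹ ^ 2 := by
  unfold huberOuter huberInner
  ring

theorem huberInner_le_huberOuter (γ : ℝ) : huberInner γ ≤ huberOuter γ :=
  sub_nonneg.1 <| huberOuter_sub_huberInner γ ▸ sq_nonneg γ⁻¹

theorem huber_of_abs_le_huberInner (ht : |t| ≤ huberInner γ) : huber γ t = γ / 2 * |t| ^ 2 := by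
  simp only [huber, one_div_mul_one_sub_eq_huberInner, if_pos ht, sq_abs]

theorem huber_of_huberInner_lt_abs_of_abs_le_huberOuter (hγ : γ ≠ 0)
    (hinner : huberInner γ < |t|) (houter : |t| ≤ huberOuter γ) :
    huber γ t = |t| - huberDefect γ + γ ^ 3 / 6 * (huberOuter γ - |t|) ^ 3 := by
  simp only [huber, one_div_mul_one_sub_eq_huberInner, one_div_mul_one_add_eq_huberOuter,
    if_neg hinner.not_ge, if_pos houter, ← sq_abs t]
  unfold huberInner huberOuter huberDefect
  field_simp
  ring

theorem huber_of_huberOuter_lt_abs (hγ : γ ≠ 0) (ht : huberOuter γ < |t|) :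
    huber γ t = |t| - huberDefect γ := by
  have hinner : huberInner γ < |t| := (huberInner_le_huberOuter γ).trans_lt ht
  simp only [huber, one_div_mul_one_sub_eq_huberInner, one_div_mul_one_add_eq_huberOuter,
    if_neg hinner.not_ge, if_neg ht.not_ge]
  unfold huberInner huberOuter huberDefect
  field_simp
  ring

theorem abs_sub_huberDefect_le_huber (hγ : 0 < γ) (t : ℝ) : |t| - huberDefect γ ≤ huber γ t := by
  rcases le_or_gt |t| (huberInner γ) with hinner | hinner
  · have hsq : huber γ t = |t| - γ⁻¹ / 2 + γ / 2 * (γ⁻¹ - |t|) ^ 2 := by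
      rw [huber_of_abs_le_huberInner hinner]
      field_simp
      ring
    have hsq_nonneg : 0 ≤ γ / 2 * (γ⁻¹ - |t|) ^ 2 := by positivity
    have hcube_nonneg : 0 ≤ γ⁻¹ ^ 3 / 24 := by positivity
    unfold huberDefect
    linarith
  rcases le_or_gt |t| (huberOuter γ) with houter | houter
  · rw [huber_of_huberInner_lt_abs_of_abs_le_huberOuter hγ.ne' hinner houter]
    exact le_add_of_nonneg_right
      (mul_nonneg (by positivity) (pow_nonneg (sub_nonneg.2 houter) 3))
  · exact (huber_of_huberOuter_lt_abs hγ.ne' houter).ge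

theorem inv_le_two_of_half_le (hγ : 1 / 2 ≤ γ) : γ⁻¹ ≤ 2 :=
  inv_le_of_inv_le₀ (by norm_num) (by simpa using hγ)

theorem inv_cube_div_six_le_huberDefect (hγ : 1 / 2 ≤ γ) : γ⁻¹ ^ 3 / 6 ≤ huberDefect γ := by
  have : 0 ≤ γ⁻¹ := inv_nonneg.2 (by linarith)
  calc γ⁻¹ ^ 3 / 6 = γ⁻¹ * γ⁻¹ ^ 2 / 8 + γ⁻¹ ^ 3 / 24 := by ring
    _ ≤ γ⁻¹ * 2 ^ 2 / 8 + γ⁻¹ ^ 3 / 24 := by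
        gcongr
        exact inv_le_two_of_half_le hγ
    _ = huberDefect γ := by
        unfold huberDefect
        ring

theorem huber_le_abs (hγ : 1 / 2 ≤ γ) (t : ℝ) : huber γ t ≤ |t| := by
  have hγ_pos : 0 < γ := by linarith
  rcases le_or_gt |t| (huberInner γ) with hinner | hinner
  · have hγt : γ * |t| ≤ 1 := calc
      γ * |t| ≤ γ * γ⁻¹ := by
        gcongr
        exact hinner.trans (sub_le_self _ (by positivity))
      _ = 1 := mul_inv_cancel₀ hγ_pos.ne'
    rw [huber_of_abs_le_huberInner hinner]
    calc γ / 2 * |t| ^ 2 = γ * |t| * |t| / 2 := by ring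
      _ ≤ 1 * |t| / 2 := by gcongr
      _ ≤ |t| := by linarith [abs_nonneg t]
  rcases le_or_gt |t| (huberOuter γ) with houter | houter
  · rw [huber_of_huberInner_lt_abs_of_abs_le_huberOuter hγ_pos.ne' hinner houter]
    suffices γ ^ 3 / 6 * (huberOuter γ - |t|) ^ 3 ≤ huberDefect γ by linarith
    calc γ ^ 3 / 6 * (huberOuter γ - |t|) ^ 3
        ≤ γ ^ 3 / 6 * (huberOuter γ - huberInner γ) ^ 3 := by gcongr
      _ = γ⁻¹ ^ 3 / 6 := by
          rw [huberOuter_sub_huberInner]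
          field_simp
      _ ≤ huberDefect γ := inv_cube_div_six_le_huberDefect hγ
  · rw [huber_of_huberOuter_lt_abs hγ_pos.ne' houter]
    exact sub_le_self _ (by unfold huberDefect; positivity)

theorem huberDefect_le_huberOuter (hγ : 1 / 2 ≤ γ) : huberDefect γ ≤ huberOuter γ := by
  have hinv_nonneg : 0 ≤ γ⁻¹ := inv_nonneg.2 (by linarith)
  have hcube : γ⁻¹ ^ 3 ≤ 2 * γ⁻¹ ^ 2 := by
    rw [pow_succ']
    gcongr
    exact inv_le_two_of_half_le hγ
  unfold huberDefect huberOuter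
  linarith [sq_nonneg γ⁻¹]

theorem three_mul_sq_mul_sub_two_mul_cube_le_cube {a w : ℝ} (ha : 0 ≤ a) (hw : 0 ≤ w) :
    3 * a ^ 2 * w - 2 * a ^ 3 ≤ w ^ 3 := by
  have hfactor : 0 ≤ (w - a) ^ 2 * (w + 2 * a) := by positivity
  linarith

theorem huber_nonneg (hγ : 1 / 2 ≤ γ) (t : ℝ) : 0 ≤ huber γ t := by
  have hγ_pos : 0 < γ := by linarith
  rcases le_or_gt |t| (huberInner γ) with hinner | hinner
  · rw [huber_of_abs_le_huberInner hinner]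
    positivity
  rcases le_or_gt |t| (huberOuter γ) with houter | houter
  · rw [huber_of_huberInner_lt_abs_of_abs_le_huberOuter hγ_pos.ne' hinner houter]
    have hslope : 0 ≤ 1 - γ⁻¹ / 2 := by linarith [inv_le_two_of_half_le hγ]
    -- Bound the cubic piece below by its tangent line at `l₁`.
    calc 0 ≤ γ / 2 * huberInner γ ^ 2 + (1 - γ⁻¹ / 2) * (|t| - huberInner γ) :=
          add_nonneg (by positivity) (mul_nonneg hslope (sub_nonneg.2 hinner.le))
      _ = |t| - huberDefect γ
            + γ ^ 3 / 6 * (3 * (γ⁻¹ ^ 2) ^ 2 * (huberOuter γ - |t|) - 2 * (γ⁻¹ ^ 2) ^ 3) := by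
          unfold huberInner huberOuter huberDefect
          field_simp
          ring
      _ ≤ |t| - huberDefect γ + γ ^ 3 / 6 * (huberOuter γ - |t|) ^ 3 := by
          gcongr
          exact three_mul_sq_mul_sub_two_mul_cube_le_cube (sq_nonneg _) (sub_nonneg.2 houter)
  · rw [huber_of_huberOuter_lt_abs hγ_pos.ne' houter]
    exact sub_nonneg.2 ((huberDefect_le_huberOuter hγ).trans houter.le)

end

theorem tendsto_huberDefect_atTop : Tendsto huberDefect atTop (𝓝 0) := by
  have hcont : Continuous fun g : ℝ => g / 2 + g ^ 3 / 24 := by fun_prop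
  unfold huberDefect
  simpa [Function.comp_def] using (hcont.tendsto 0).comp tendsto_inv_atTop_zero

theorem tendstoUniformly_huber_abs : TendstoUniformly huber (fun t => |t|) atTop := by
  rw [Metric.tendstoUniformly_iff]
  intro ε hε
  filter_upwards [tendsto_huberDefect_atTop.eventually_lt_const hε, eventually_ge_atTop (1 / 2)]
    with γ hdefect hγ t
  rw [Real.dist_eq, abs_of_nonneg (sub_nonneg.2 (huber_le_abs hγ t))]
  linarith [abs_sub_huberDefect_le_huber (by linarith : 0 < γ) t]

theorem stmt_6_general :
    (∀ γ : ℝ, 1 / 2 ≤ γ → ∀ t : ℝ, 0 ≤ huber γ t ∧ huber γ t ≤ |t|) ∧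
    TendstoUniformly huber (fun t => |t|) atTop :=
  ⟨fun _ hγ t => ⟨huber_nonneg hγ t, huber_le_abs hγ t⟩, tendstoUniformly_huber_abs⟩

/-- For every `γ ≥ 1` the Huber function satisfies
`0 ≤ H_γ(t) ≤ |t|`, and for each fixed `t`, `H_γ(t) → |t|` as `γ → ∞`. -/
theorem stmt_6 :
    (∀ γ : ℝ, 1 ≤ γ → ∀ t : ℝ, 0 ≤ huber γ t ∧ huber γ t ≤ |t|) ∧
    (∀ t : ℝ, Filter.Tendsto (fun γ : ℝ => huber γ t) Filter.atTop (nhds |t|)) :=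
  ⟨fun γ hγ => stmt_6_general.1 γ (by linarith), stmt_6_general.2.tendsto_at⟩
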